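/- If a redex record merge is typable with a record type then so is its contractum: whenever Γ ⊢ ⟨aᵢ=Mᵢ | i∈I⟩ ⊕ ⟨aⱼ=Nⱼ | j∈J⟩ : ⟨b:σ⟩, then Γ ⊢ ⟨aᵢ=Mᵢ, aⱼ=Nⱼ | i∈I∖J, j∈J⟩ : ⟨b:σ⟩. -/

import Mathlib

/-!
By induction on derivations, every type of the redex `⟨r⟩ ⊕ s` is a type of the contractum
(`Der.contract`), so no inversion of the typing of the merge itself is needed. The two merge rules
are the cases with content, and both rest on how field lookup behaves in the merged record:

* (⊕_r): lookups in `s` survive the merge, so every type of `s` is a type of the merged record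
  (`Der.mono_rcd`).
* (⊕_l): if `a` is not a label of `s`, then `a` is looked up in `r`. Here a genuine generation lemma
  for records is needed (`Der.rcd_generation`): if `⟨r⟩ : ⟨a:σ⟩`, then `r` has a field `a = M` with
  `M : σ`. Since subsumption may pass through arbitrary types, it is proved through a predicate on
  all types, `FieldsTyped`, which is closed under type inclusion.
-/


/-- Intersection types with record types: σ,τ ::= α | t | ω | σ→τ | σ∩τ | ⟨a:σ⟩. -/
inductive Ty : Type
  | tvar : ℕ → Ty
  | tconst : ℕ → Ty
  | omega : Ty
  | arrow : Ty → Ty → Ty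
  | inter : Ty → Ty → Ty
  | rcd : ℕ → Ty → Ty

/-- The type-inclusion preorder (BCD extended with record axioms). -/
inductive Subt : Ty → Ty → Prop
  | refl (σ) : Subt σ σ
  | trans {σ τ ρ} : Subt σ τ → Subt τ ρ → Subt σ ρ
  | top (σ) : Subt σ .omega
  | omegaArrow : Subt .omega (.arrow .omega .omega)
  | interLeft (σ τ) : Subt (.inter σ τ) σ
  | interRight (σ τ) : Subt (.inter σ τ) τ
  | arrowInter (σ τ₁ τ₂) : Subt (.inter (.arrow σ τ₁) (.arrow σ τ₂)) (.arrow σ (.inter τ₁ τ₂))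
  | interGlb {σ τ₁ τ₂} : Subt σ τ₁ → Subt σ τ₂ → Subt σ (.inter τ₁ τ₂)
  | arrowMono {σ₁ σ₂ τ₁ τ₂} : Subt σ₂ σ₁ → Subt τ₁ τ₂ → Subt (.arrow σ₁ τ₁) (.arrow σ₂ τ₂)
  | rcdMono {a σ τ} : Subt σ τ → Subt (.rcd a σ) (.rcd a τ)
  | rcdInter (a σ τ) : Subt (.inter (.rcd a σ) (.rcd a τ)) (.rcd a (.inter σ τ))

/-- A finite intersection ⋂ᵢ ⟨aᵢ:σᵢ⟩ of record types (ω for the empty list). -/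
def recTy : List (ℕ × Ty) → Ty
  | [] => .omega
  | [(a, σ)] => .rcd a σ
  | (a, σ) :: t => .inter (.rcd a σ) (recTy t)

mutual
/-- Terms of Λ_R. -/
inductive Tm : Type
  | var : ℕ → Tm
  | lit : ℤ → Tm
  | lam : ℕ → Tm → Tm
  | app : Tm → Tm → Tm
  | rcd : Rcd → Tm
  | sel : Tm → ℕ → Tm
  | mrg : Tm → Rcd → Tm
/-- Record terms. -/
inductive Rcd : Type
  | nil : Rcd
  | cons : ℕ → Tm → Rcd → Rcd
end

def Rcd.find : Rcd → ℕ → Option Tm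
  | .nil, _ => none
  | .cons a M r, b => if a = b then some M else r.find b

def Rcd.lbls : Rcd → List ℕ
  | .nil => []
  | .cons a _ r => a :: r.lbls

def Rcd.restrict : Rcd → List ℕ → Rcd
  | .nil, _ => .nil
  | .cons a M r, L => if a ∈ L then r.restrict L else .cons a M (r.restrict L)

def Rcd.append : Rcd → Rcd → Rcd
  | .nil, s => s
  | .cons a M r, s => .cons a M (r.append s)

/-- The merge of two records: fields of `s` override those of `r`. -/
def Rcd.mergeR (r s : Rcd) : Rcd := (r.restrict s.lbls).append s

mutual
def Tm.subst : Tm → ℕ → Tm → Tm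
  | .var y, x, N => if y = x then N else .var y
  | .lit n, _, _ => .lit n
  | .lam y M, x, N => if y = x then .lam y M else .lam y (M.subst x N)
  | .app M₁ M₂, x, N => .app (M₁.subst x N) (M₂.subst x N)
  | .rcd r, x, N => .rcd (r.substR x N)
  | .sel M a, x, N => .sel (M.subst x N) a
  | .mrg M r, x, N => .mrg (M.subst x N) (r.substR x N)
def Rcd.substR : Rcd → ℕ → Tm → Rcd
  | .nil, _, _ => .nil
  | .cons a M r, x, N => .cons a (M.subst x N) (r.substR x N)
end

mutual
def Tm.fv : Tm → List ℕ
  | .var y => [y]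
  | .lit _ => []
  | .lam y M => M.fv.filter (fun z => z ≠ y)
  | .app M N => M.fv ++ N.fv
  | .rcd r => r.fvR
  | .sel M _ => M.fv
  | .mrg M r => M.fv ++ r.fvR
def Rcd.fvR : Rcd → List ℕ
  | .nil => []
  | .cons _ M r => M.fv ++ r.fvR
end

mutual
/-- One-step reduction: β, record selection, record merge, closed under contexts. -/
inductive Red : Tm → Tm → Prop
  | beta (x M N) : Red (.app (.lam x M) N) (M.subst x N)
  | rsel {r : Rcd} {a M} : r.find a = some M → Red (.sel (.rcd r) a) M
  | mergeRed (r s : Rcd) : Red (.mrg (.rcd r) s) (.rcd (r.mergeR s))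
  | lamC {x M M'} : Red M M' → Red (.lam x M) (.lam x M')
  | appL {M M' N} : Red M M' → Red (.app M N) (.app M' N)
  | appR {M N N'} : Red N N' → Red (.app M N) (.app M N')
  | rcdC {r r'} : RedR r r' → Red (.rcd r) (.rcd r')
  | selC {M M' a} : Red M M' → Red (.sel M a) (.sel M' a)
  | mrgL {M M' r} : Red M M' → Red (.mrg M r) (.mrg M' r)
  | mrgR {M r r'} : RedR r r' → Red (.mrg M r) (.mrg M r')
inductive RedR : Rcd → Rcd → Prop
  | head {a M M' r} : Red M M' → RedR (.cons a M r) (.cons a M' r)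
  | tail {a M r r'} : RedR r r' → RedR (.cons a M r) (.cons a M r')
end

def IntTy : Ty := .tconst 0

/-- The intersection type assignment system for Λ_R. -/
inductive Der : (ℕ → Ty) → Tm → Ty → Prop
  | var (Γ x) : Der Γ (.var x) (Γ x)
  | lit (Γ n) : Der Γ (.lit n) IntTy
  | lamI {Γ x M σ τ} : Der (Function.update Γ x σ) M τ → Der Γ (.lam x M) (.arrow σ τ)
  | appE {Γ M N σ τ} : Der Γ M (.arrow σ τ) → Der Γ N σ → Der Γ (.app M N) τ
  | top (Γ M) : Der Γ M .omega
  | interI {Γ M σ τ} : Der Γ M σ → Der Γ M τ → Der Γ M (.inter σ τ)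
  | sub {Γ M σ τ} : Der Γ M σ → Subt σ τ → Der Γ M τ
  | sel {Γ M a σ} : Der Γ M (.rcd a σ) → Der Γ (.sel M a) σ
  | rcdI {Γ} {r : Rcd} {a M σ} : r.find a = some M → Der Γ M σ → Der Γ (.rcd r) (.rcd a σ)
  | mrgL {Γ M} {r : Rcd} {a σ} : Der Γ M (.rcd a σ) → a ∉ r.lbls → Der Γ (.mrg M r) (.rcd a σ)
  | mrgR {Γ M} {r : Rcd} {a σ} : Der Γ (.rcd r) (.rcd a σ) → Der Γ (.mrg M r) (.rcd a σ)

/-- Every record type `⟨a:σ⟩` occurring as a top-level conjunct of the given type is witnessed by a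
field `a = M` of `r` with `M : σ`. Conjuncts that are not record types impose no condition, which
keeps the predicate closed under `ω ≤ ω → ω` and the other arrow axioms. -/
def FieldsTyped (Γ : ℕ → Ty) (r : Rcd) : Ty → Prop
  | .rcd a σ => ∃ M, r.find a = some M ∧ Der Γ M σ
  | .inter σ τ => FieldsTyped Γ r σ ∧ FieldsTyped Γ r τ
  | _ => True

theorem FieldsTyped.mono {Γ : ℕ → Ty} {r : Rcd} {σ τ : Ty} (h : Subt σ τ) :
    FieldsTyped Γ r σ → FieldsTyped Γ r τ := by
  induction h with
  | refl => exact id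
  | trans _ _ ih₁ ih₂ => exact ih₂ ∘ ih₁
  | top => exact fun _ => trivial
  | omegaArrow => exact fun _ => trivial
  | interLeft => exact And.left
  | interRight => exact And.right
  | arrowInter => exact fun _ => trivial
  | interGlb _ _ ih₁ ih₂ => exact fun h => ⟨ih₁ h, ih₂ h⟩
  | arrowMono => exact fun _ => trivial
  | rcdMono h => exact fun ⟨M, hM, hd⟩ => ⟨M, hM, hd.sub h⟩
  | rcdInter =>
    -- lookup is a function, so both conjuncts are witnessed by the same field
    rintro ⟨⟨M, hM, hd⟩, N, hN, hd'⟩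
    obtain rfl : M = N := Option.some.inj (hM.symm.trans hN)
    exact ⟨M, hM, hd.interI hd'⟩

theorem Der.fieldsTyped {Γ : ℕ → Ty} {r : Rcd} {τ : Ty} (h : Der Γ (.rcd r) τ) :
    FieldsTyped Γ r τ := by
  generalize hT : Tm.rcd r = T at h
  induction h with
  | top => trivial
  | interI _ _ ih₁ ih₂ => exact ⟨ih₁ hT, ih₂ hT⟩
  | sub _ hs ih => exact (ih hT).mono hs
  | rcdI hf hd =>
    cases hT
    exact ⟨_, hf, hd⟩
  | _ => cases hT

theorem Der.rcd_generation {Γ : ℕ → Ty} {r : Rcd} {a : ℕ} {σ : Ty}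
    (h : Der Γ (.rcd r) (.rcd a σ)) : ∃ M, r.find a = some M ∧ Der Γ M σ :=
  h.fieldsTyped

theorem Der.mono_rcd {Γ : ℕ → Ty} {r r' : Rcd} {τ : Ty}
    (hr : ∀ a M, r.find a = some M → r'.find a = some M) (h : Der Γ (.rcd r) τ) :
    Der Γ (.rcd r') τ := by
  generalize hT : Tm.rcd r = T at h
  induction h with
  | top => exact .top _ _
  | interI _ _ ih₁ ih₂ => exact .interI (ih₁ hT) (ih₂ hT)
  | sub _ hs ih => exact .sub (ih hT) hs
  | rcdI hf hd =>
    cases hT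
    exact .rcdI (hr _ _ hf) hd
  | _ => cases hT

theorem Rcd.find_append (r s : Rcd) (a : ℕ) :
    (r.append s).find a = (r.find a).or (s.find a) := by
  match r with
  | .nil => simp [Rcd.append, Rcd.find]
  | .cons b M r =>
    have ih := Rcd.find_append r s a
    by_cases h : b = a <;> simp [Rcd.append, Rcd.find, h, ih]

theorem Rcd.find_restrict (r : Rcd) (L : List ℕ) (a : ℕ) :
    (r.restrict L).find a = if a ∈ L then none else r.find a := by
  match r with
  | .nil => simp [Rcd.restrict, Rcd.find]
  | .cons b M r =>
    have ih := Rcd.find_restrict r L a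
    by_cases hb : b ∈ L <;> by_cases h : b = a <;> simp_all [Rcd.restrict, Rcd.find]

theorem Rcd.find_eq_none {s : Rcd} {a : ℕ} (h : a ∉ s.lbls) : s.find a = none := by
  match s with
  | .nil => rfl
  | .cons b M s =>
    simp only [Rcd.lbls, List.mem_cons, not_or] at h
    simp [Rcd.find, Ne.symm h.1, Rcd.find_eq_none h.2]

theorem Rcd.find_mergeR_of_notMem {r s : Rcd} {a : ℕ} (h : a ∉ s.lbls) :
    (r.mergeR s).find a = r.find a := by
  simp [Rcd.mergeR, Rcd.find_append, Rcd.find_restrict, h, Rcd.find_eq_none h]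

theorem Rcd.find_mergeR_right {r s : Rcd} {a : ℕ} {M : Tm} (h : s.find a = some M) :
    (r.mergeR s).find a = some M := by
  have ha : a ∈ s.lbls := by
    by_contra hn
    simp [Rcd.find_eq_none hn] at h
  simp [Rcd.mergeR, Rcd.find_append, Rcd.find_restrict, ha, h]

/-- Every type of a merge redex, not only a record type, is a type of its contractum. -/
theorem Der.contract {Γ : ℕ → Ty} {r s : Rcd} {τ : Ty} (h : Der Γ (.mrg (.rcd r) s) τ) :
    Der Γ (.rcd (r.mergeR s)) τ := by
  generalize hT : Tm.mrg (.rcd r) s = T at h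
  induction h with
  | top => exact .top _ _
  | interI _ _ ih₁ ih₂ => exact .interI (ih₁ hT) (ih₂ hT)
  | sub _ hs ih => exact .sub (ih hT) hs
  | mrgL hd ha =>
    cases hT
    obtain ⟨M, hM, hd'⟩ := hd.rcd_generation
    exact .rcdI ((Rcd.find_mergeR_of_notMem ha).trans hM) hd'
  | mrgR hd =>
    cases hT
    exact hd.mono_rcd fun _ _ => Rcd.find_mergeR_right
  | _ => cases hT

/-- if a record-merge redex is typable with a record type,
then so is its contractum. -/
theorem merge_redex_contractum_typable (Γ : ℕ → Ty) (r s : Rcd) (b : ℕ) (σ : Ty)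
    (h : Der Γ (.mrg (.rcd r) s) (.rcd b σ)) :
    Der Γ (.rcd (r.mergeR s)) (.rcd b σ) :=
  h.contract
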